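/- Let μ ≥ 0 and q ≥ 2. Suppose (x_1, f_1, g_1) and (x_2, f_2, g_2), with x_i, g_i in R^d and f_i in R, satisfy f_i ≥ f_j + ⟨g_j, x_i - x_j⟩ + (μ/q)‖x_i - x_j‖^q for all i, j in {1,2}. Then for every x in R^d there exist f in R and g in R^d such that f ≥ f_i + ⟨g_i, x - x_i⟩ + (μ/q)‖x - x_i‖^q and f_j ≥ f + ⟨g, x_j - x⟩ + (μ/q)‖x - x_j‖^q for all i, j in {1,2}. -/

import Mathlib

open RealInnerProductSpace

/-!
If `x'` lies outside the segment `[x₀, x₁]`, a functional separating `x'` from the segment takes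
negative values at both `xᵢ - x'`. A large multiple of it meets the upper constraints, whatever
value was chosen at `x'`.

If `x' = a x₀ + b x₁` is a convex combination, choose the value and the slope along the segment so
that both upper constraints are equalities. The lower constraints then reduce to
`a b ^ q + b a ^ q + b ^ q ≤ b`, which is an identity for `q = 2` and only improves as `q` grows,
since `0 ≤ a, b ≤ 1`.
-/

section Chord

variable {a b q K : ℝ}

theorem mul_rpow_add_mul_rpow_add_rpow_le (ha : 0 ≤ a) (hb : 0 ≤ b) (hab : a + b = 1)
    (hq : 2 ≤ q) : a * b ^ q + b * a ^ q + b ^ q ≤ b := by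
  have rpow_le_sq {t : ℝ} (ht : 0 ≤ t) (ht1 : t ≤ 1) : t ^ q ≤ t ^ 2 := by
    simpa only [Real.rpow_two] using Real.rpow_le_rpow_of_exponent_ge' ht ht1 zero_le_two hq
  have ha2 : a ^ q ≤ a ^ 2 := rpow_le_sq ha (by linarith)
  have hb2 : b ^ q ≤ b ^ 2 := rpow_le_sq hb (by linarith)
  calc a * b ^ q + b * a ^ q + b ^ q ≤ a * b ^ 2 + b * a ^ 2 + b ^ 2 := by gcongr
    _ = b := by rw [eq_sub_of_add_eq hab]; ring

/-- The largest value at `a • x + b • y` (where `a + b = 1`) that uniform convexity of exponent `q`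
allows for a function with values `u` at `x` and `v` at `y`. Here `K` stands for
`μ / q * ‖y - x‖ ^ q`. -/
noncomputable def chordValue (K q a b u v : ℝ) : ℝ :=
  a * u + b * v - K * (a * b ^ q + b * a ^ q)

/-- The derivative in direction `y - x` which, together with `chordValue`, turns the uniform
convexity inequalities from `a • x + b • y` to the endpoints `x` and `y` into equalities. -/
noncomputable def chordSlope (K q a b u v : ℝ) : ℝ :=
  v - u - K * (a ^ q - b ^ q)

theorem chordValue_swap (K q a b u v : ℝ) : chordValue K q b a v u = chordValue K q a b u v := by
  unfold chordValue; ring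

theorem chordSlope_swap (K q a b u v : ℝ) : chordSlope K q b a v u = -chordSlope K q a b u v := by
  unfold chordSlope; ring

theorem chordValue_sub_mul_chordSlope_add (K q u v : ℝ) (hab : a + b = 1) :
    chordValue K q a b u v - b * chordSlope K q a b u v + K * b ^ q = u := by
  rw [chordValue, chordSlope, eq_sub_of_add_eq hab]; ring

theorem add_mul_add_le_chordValue (hK : 0 ≤ K) (ha : 0 ≤ a) (hb : 0 ≤ b) (hab : a + b = 1)
    (hq : 2 ≤ q) {u v p : ℝ} (h : u + p + K ≤ v) :
    u + b * p + K * b ^ q ≤ chordValue K q a b u v := by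
  have hp : b * p ≤ b * (v - u - K) := by gcongr; linarith
  have hpow : K * (a * b ^ q + b * a ^ q + b ^ q) ≤ K * b := by
    gcongr; exact mul_rpow_add_mul_rpow_add_rpow_le ha hb hab hq
  have hau : a * u = u - b * u := by rw [eq_sub_of_add_eq hab]; ring
  unfold chordValue
  linarith

end Chord

theorem exists_strongDual_apply_sub_le_of_notMem_convexHull {E ι : Type*} [AddCommGroup E]
    [Module ℝ E] [TopologicalSpace E] [IsTopologicalAddGroup E] [ContinuousSMul ℝ E] [T2Space E]
    [LocallyConvexSpace ℝ E] [Finite ι] {x : ι → E} {z : E}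
    (hz : z ∉ convexHull ℝ (Set.range x)) (r : ι → ℝ) :
    ∃ φ : StrongDual ℝ E, ∀ i, φ (x i - z) ≤ r i := by
  obtain ⟨φ, s, hφs, hsz⟩ := geometric_hahn_banach_closed_point (convex_convexHull ℝ (Set.range x))
    ((Set.finite_range x).isClosed_convexHull ℝ) hz
  have hneg (i : ι) : φ (x i - z) < 0 := by
    rw [map_sub, sub_neg]
    exact (hφs _ (subset_convexHull ℝ _ (Set.mem_range_self i))).trans hsz
  obtain ⟨t, ht⟩ := (Set.finite_range fun i => r i / φ (x i - z)).bddAbove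
  exact ⟨t • φ, fun i => (div_le_iff_of_neg (hneg i)).1 (ht (Set.mem_range_self i))⟩

theorem exists_strongDual_apply_eq {R V : Type*} [Field R] [TopologicalSpace R]
    [IsTopologicalRing R] [AddCommGroup V] [TopologicalSpace V] [Module R V] [SeparatingDual R V]
    {u : V} {m : R} (h : u = 0 → m = 0) : ∃ φ : StrongDual R V, φ u = m := by
  by_cases hu : u = 0
  · exact ⟨0, (h hu).symm⟩
  · obtain ⟨φ, hφ⟩ := SeparatingDual.exists_eq_one (R := R) hu
    exact ⟨m • φ, by simp [hφ]⟩

section Extension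

variable {E : Type*} [NormedAddCommGroup E] [NormedSpace ℝ E]

theorem exists_extension_of_notMem_convexHull {ι : Type*} [Finite ι] (c q : ℝ) (x : ι → E)
    (g : ι → StrongDual ℝ E) (f : ι → ℝ) {z : E} (hz : z ∉ convexHull ℝ (Set.range x)) :
    ∃ (fz : ℝ) (gz : StrongDual ℝ E),
      (∀ i, fz ≥ f i + g i (z - x i) + c * ‖z - x i‖ ^ q) ∧
      (∀ i, f i ≥ fz + gz (x i - z) + c * ‖z - x i‖ ^ q) := by
  obtain ⟨fz, hfz⟩ :=
    (Set.finite_range fun i => f i + g i (z - x i) + c * ‖z - x i‖ ^ q).bddAbove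
  obtain ⟨gz, hgz⟩ := exists_strongDual_apply_sub_le_of_notMem_convexHull hz
    fun i => f i - fz - c * ‖z - x i‖ ^ q
  exact ⟨fz, gz, fun i => hfz (Set.mem_range_self i), fun i => by linarith [hgz i]⟩

variable {c q a b u v : ℝ} {x y : E}

theorem add_apply_add_le_chordValue (hc : 0 ≤ c) (hq : 2 ≤ q) (ha : 0 ≤ a) (hb : 0 ≤ b)
    (hab : a + b = 1) {φ : StrongDual ℝ E} (h : v ≥ u + φ (y - x) + c * ‖y - x‖ ^ q) :
    u + φ (b • (y - x)) + c * ‖b • (y - x)‖ ^ q ≤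
      chordValue (c * ‖y - x‖ ^ q) q a b u v := by
  have key := add_mul_add_le_chordValue (by positivity) ha hb hab hq h
  rw [map_smul, smul_eq_mul, norm_smul_of_nonneg hb, Real.mul_rpow hb (norm_nonneg _)]
  linarith

theorem chordValue_add_apply_add_eq (hb : 0 ≤ b) (hab : a + b = 1) {φ : StrongDual ℝ E}
    (hφ : φ (y - x) = chordSlope (c * ‖y - x‖ ^ q) q a b u v) :
    chordValue (c * ‖y - x‖ ^ q) q a b u v + φ (-(b • (y - x))) + c * ‖b • (y - x)‖ ^ q = u := by
  have key := chordValue_sub_mul_chordSlope_add (c * ‖y - x‖ ^ q) q u v hab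
  rw [map_neg, map_smul, smul_eq_mul, hφ, norm_smul_of_nonneg hb, Real.mul_rpow hb (norm_nonneg _)]
  linarith

theorem exists_extension_of_mem_segment (hc : 0 ≤ c) (hq : 2 ≤ q) {gx gy : StrongDual ℝ E}
    (hxy : v ≥ u + gx (y - x) + c * ‖y - x‖ ^ q) (hyx : u ≥ v + gy (x - y) + c * ‖x - y‖ ^ q)
    {z : E} (hz : z ∈ segment ℝ x y) :
    ∃ (fz : ℝ) (gz : StrongDual ℝ E),
      (fz ≥ u + gx (z - x) + c * ‖z - x‖ ^ q ∧ fz ≥ v + gy (z - y) + c * ‖z - y‖ ^ q) ∧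
      (u ≥ fz + gz (x - z) + c * ‖z - x‖ ^ q ∧ v ≥ fz + gz (y - z) + c * ‖z - y‖ ^ q) := by
  obtain ⟨a, b, ha, hb, hab, rfl⟩ := hz
  have hba : b + a = 1 := by rwa [add_comm]
  have hzx : a • x + b • y - x = b • (y - x) := by rw [eq_sub_of_add_eq hab]; module
  have hzy : a • x + b • y - y = a • (x - y) := by rw [eq_sub_of_add_eq hba]; module
  have hxz : x - (a • x + b • y) = -(b • (y - x)) := by rw [← hzx, neg_sub]
  have hyz : y - (a • x + b • y) = -(a • (x - y)) := by rw [← hzy, neg_sub]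
  have slope_eq_zero (h : y - x = 0) : chordSlope (c * ‖y - x‖ ^ q) q a b u v = 0 := by
    have hq0 : q ≠ 0 := by positivity
    obtain rfl := sub_eq_zero.1 h
    simp only [sub_self, map_zero, norm_zero, Real.zero_rpow hq0, mul_zero, add_zero] at hxy hyx
    simp [chordSlope, Real.zero_rpow hq0, le_antisymm hyx hxy]
  obtain ⟨φ, hφ⟩ := exists_strongDual_apply_eq slope_eq_zero
  have hφ' : φ (x - y) = chordSlope (c * ‖x - y‖ ^ q) q b a v u := by
    rw [chordSlope_swap, norm_sub_rev x y, ← hφ, ← map_neg, neg_sub]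
  have hswap : chordValue (c * ‖x - y‖ ^ q) q b a v u =
      chordValue (c * ‖y - x‖ ^ q) q a b u v := by rw [chordValue_swap, norm_sub_rev]
  refine ⟨chordValue (c * ‖y - x‖ ^ q) q a b u v, φ, ?_⟩
  rw [hzx, hzy, hxz, hyz]
  refine ⟨⟨add_apply_add_le_chordValue hc hq ha hb hab hxy, ?_⟩,
    (chordValue_add_apply_add_eq hb hab hφ).le, ?_⟩ <;> rw [← hswap]
  · exact add_apply_add_le_chordValue hc hq hb ha hba hyx
  · exact (chordValue_add_apply_add_eq ha hba hφ').le

theorem stmt5_general {μ : ℝ} (hμ : 0 ≤ μ) (hq : 2 ≤ q) (x : Fin 2 → E)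
    (g : Fin 2 → StrongDual ℝ E) (f : Fin 2 → ℝ)
    (h : ∀ i j, f i ≥ f j + g j (x i - x j) + μ / q * ‖x i - x j‖ ^ q) (x' : E) :
    ∃ (fv : ℝ) (gv : StrongDual ℝ E),
      (∀ i, fv ≥ f i + g i (x' - x i) + μ / q * ‖x' - x i‖ ^ q) ∧
      (∀ j, f j ≥ fv + gv (x j - x') + μ / q * ‖x' - x j‖ ^ q) := by
  by_cases hx' : x' ∈ convexHull ℝ (Set.range x)
  · have hseg : x' ∈ segment ℝ (x 0) (x 1) := by
      have hrange : Set.range x = {x 0, x 1} := by ext; simp [Fin.exists_fin_two, eq_comm]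
      rwa [← convexHull_pair, ← hrange]
    simp only [Fin.forall_fin_two]
    exact exists_extension_of_mem_segment (by positivity) hq (h 1 0) (h 0 1) hseg
  · exact exists_extension_of_notMem_convexHull (μ / q) q x g f hx'

end Extension

theorem stmt5 (d : ℕ) (μ q : ℝ) (hμ : 0 ≤ μ) (hq : 2 ≤ q)
    (x g : Fin 2 → EuclideanSpace ℝ (Fin d)) (f : Fin 2 → ℝ)
    (h : ∀ i j, f i ≥ f j + ⟪g j, x i - x j⟫ + μ / q * ‖x i - x j‖ ^ q) :
    ∀ x' : EuclideanSpace ℝ (Fin d), ∃ (fv : ℝ) (gv : EuclideanSpace ℝ (Fin d)),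
      (∀ i, fv ≥ f i + ⟪g i, x' - x i⟫ + μ / q * ‖x' - x i‖ ^ q) ∧
      (∀ j, f j ≥ fv + ⟪gv, x j - x'⟫ + μ / q * ‖x' - x j‖ ^ q) := by
  intro x'
  obtain ⟨fv, φ, hlower, hupper⟩ :=
    stmt5_general hμ hq x (fun i => InnerProductSpace.toDual ℝ _ (g i)) f h x'
  exact ⟨fv, (InnerProductSpace.toDual ℝ _).symm φ, hlower, by simpa using hupper⟩
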